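/- Let G be a finite directed graph with node set V = V_0 ⊎ V_1 partitioned between Player 0 and Player 1, arc set E ⊆ V × V with real weights w, and suppose every node has at least one outgoing arc. Then the following are equivalent: (i) there exists s : V → ℝ such that for every u ∈ V_0 and every arc (u, v) ∈ E one has s(u) ≥ s(v) − w(u, v), and for every u ∈ V_1 there exists an arc (u, v) ∈ E with s(u) ≥ s(v) − w(u, v); (ii) there exists a positional strategy π : V_1 → V with (u, π(u)) ∈ E for every u ∈ V_1 such that the subgraph G_π, retaining all arcs with tail in V_0 and, for each u ∈ V_1, only the arc (u, π(u)), is conservative (every directed cycle of G_π has nonnegative total weight). (Condition (i) is the consistency of the HyTN associated to the mean payoff game G, and condition (ii) holds exactly when every node of G is a winning start position for Player 1.) -/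

import Mathlib

/-!
Condition (i) says that some projection `G_π` admits a potential, so the equivalence reduces to the
classical fact that a finite weighted digraph admits a potential exactly when it is conservative.
Given a potential, its increments along a cycle telescope to zero and are bounded by the weights.
Conversely, take `-s u` to be the infimum of the weights of the simple paths starting at `u`: of
these there are finitely many. An arc `(u, v)` followed by a simple path from `v` either is a simple
path, or returns to `u`, in which case dropping the cycle so formed leaves a simple path from `u`
that is not heavier.
-/

section Potential

variable {V A : Type*} {R : V → V → Prop} {w : V → V → A}

/-- A weighted digraph is conservative when each of its cycles has nonnegative total weight. A cycle
of length `n + 1` is encoded as a family of vertices indexed by `ZMod (n + 1)`, possibly with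
repetitions. -/
def Conservative [AddCommMonoid A] [LE A] (R : V → V → Prop) (w : V → V → A) : Prop :=
  ∀ (n : ℕ) (c : ZMod (n + 1) → V), (∀ k, R (c k) (c (k + 1))) → 0 ≤ ∑ k, w (c k) (c (k + 1))

/-- A feasible potential of a weighted digraph: a vertex labelling whose increment along each arc is
at most the weight of that arc. -/
def IsPotential [Sub A] [LE A] (R : V → V → Prop) (w : V → V → A) (s : V → A) : Prop :=
  ∀ u v, R u v → s v - w u v ≤ s u

lemma IsPotential.conservative [AddCommGroup A] [PartialOrder A] [IsOrderedAddMonoid A] {s : V → A}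
    (hs : IsPotential R w s) : Conservative R w := by
  intro n c hc
  have shift : ∑ k, s (c (k + 1)) = ∑ k, s (c k) :=
    Equiv.sum_comp (Equiv.addRight (1 : ZMod (n + 1))) (s ∘ c)
  calc
    0 = ∑ k, (s (c (k + 1)) - s (c k)) := by rw [Finset.sum_sub_distrib, shift, sub_self]
    _ ≤ ∑ k, w (c k) (c (k + 1)) :=
      Finset.sum_le_sum fun k _ => sub_le_comm.mp (hs _ _ (hc k))

/-- The total weight of the arcs of a walk, given as the list of its vertices. -/
def walkWeight [AddZeroClass A] (w : V → V → A) : List V → A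
  | u :: v :: l => w u v + walkWeight w (v :: l)
  | _ => 0

lemma walkWeight_append_cons [AddMonoid A] (w : V → V → A) (p q : List V) (u : V) :
    walkWeight w (p ++ u :: q) = walkWeight w (p ++ [u]) + walkWeight w (u :: q) := by
  induction p with
  | nil => simp [walkWeight]
  | cons a p ih => cases p <;> simp_all [walkWeight, add_assoc]

lemma walkWeight_cons_concat [AddCommMonoid A] (w : V → V → A) (u v : V) (l : List V) :
    walkWeight w (u :: l ++ [v]) = ∑ k : Fin (l.length + 1), w (u :: l)[k] (l ++ [v])[k] := by
  induction l generalizing u with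
  | nil => simp [walkWeight]
  | cons a l ih =>
    rw [Fin.sum_univ_succ]
    exact congrArg (w u a + ·) (ih a)

lemma Conservative.walkWeight_nonneg [AddCommMonoid A] [LE A] (h : Conservative R w) {u : V}
    {l : List V} (hl : (u :: l ++ [u]).IsChain R) : 0 ≤ walkWeight w (u :: l ++ [u]) := by
  -- `ZMod (n + 1)` unfolds to `Fin (n + 1)`, so `Conservative` applies to `c`.
  let c : Fin (l.length + 1) → V := fun k => (u :: l)[k]
  have c_succ (k) : c (k + 1) = (l ++ [u])[k] := by
    have rotate := List.getElem_rotate (u :: l) 1 k (by simpa using Nat.le_of_lt_succ k.isLt)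
    simpa [c, Fin.val_add] using rotate.symm
  have arcs (k) : R (c k) (c (k + 1)) := by
    rw [c_succ]
    have arc := hl.getElem k (by simpa using Nat.le_of_lt_succ k.isLt)
    rwa [List.getElem_append_left k.isLt] at arc
  calc
    0 ≤ ∑ k, w (c k) (c (k + 1)) := h l.length c arcs
    _ = walkWeight w (u :: l ++ [u]) := by simp only [c_succ, c, walkWeight_cons_concat]

/-- The lists `l` for which `u :: l` is the vertex list of a simple path. -/
def simplePathTails (R : V → V → Prop) (u : V) : Set (List V) :=
  {l | (u :: l).IsChain R ∧ (u :: l).Nodup}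

lemma finite_simplePathTails [Finite V] (R : V → V → Prop) (u : V) :
    (simplePathTails R u).Finite := by
  have := Fintype.ofFinite V
  exact (List.finite_length_le V (Fintype.card V)).subset fun l hl => hl.2.of_cons.length_le_card

lemma nil_mem_simplePathTails (R : V → V → Prop) (u : V) : [] ∈ simplePathTails R u := by
  simp [simplePathTails]

lemma Conservative.exists_walkWeight_le [AddCommMonoid A] [Preorder A] [AddLeftMono A]
    (h : Conservative R w) {u v : V} (huv : R u v) {l : List V} (hl : l ∈ simplePathTails R v) :
    ∃ l' ∈ simplePathTails R u, walkWeight w (u :: l') ≤ w u v + walkWeight w (v :: l) := by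
  obtain ⟨chain, nodup⟩ := hl
  have chain' : (u :: v :: l).IsChain R := chain.cons_cons huv
  by_cases hu : u ∈ v :: l
  · obtain ⟨p, q, hpq⟩ := List.append_of_mem hu
    rw [hpq] at chain nodup chain'
    have cycle : 0 ≤ walkWeight w (u :: p ++ [u]) :=
      h.walkWeight_nonneg (chain'.prefix ⟨q, by simp⟩)
    refine ⟨q, ⟨chain.right_of_append, nodup.of_append_right⟩, ?_⟩
    calc
      walkWeight w (u :: q) ≤ walkWeight w (u :: p ++ [u]) + walkWeight w (u :: q) :=
        le_add_of_nonneg_left cycle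
      _ = walkWeight w (u :: v :: l) := by rw [← walkWeight_append_cons, hpq, List.cons_append]
  · exact ⟨v :: l, ⟨chain', List.nodup_cons.mpr ⟨hu, nodup⟩⟩, le_rfl⟩

lemma Conservative.exists_isPotential [Finite V] [AddCommGroup A] [Lattice A] [IsOrderedAddMonoid A]
    (h : Conservative R w) : ∃ s, IsPotential R w s := by
  let tails u := (finite_simplePathTails R u).toFinset
  have tails_nonempty u : (tails u).Nonempty :=
    ⟨[], (Set.Finite.mem_toFinset _).mpr (nil_mem_simplePathTails R u)⟩
  let dist u := (tails u).inf' (tails_nonempty u) fun l => walkWeight w (u :: l)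
  refine ⟨-dist, fun u v huv => ?_⟩
  suffices dist u - w u v ≤ dist v by
    rwa [Pi.neg_apply, Pi.neg_apply, ← neg_add', neg_le_neg_iff, ← sub_le_iff_le_add]
  refine Finset.le_inf' _ _ fun l hl => ?_
  obtain ⟨l', hl', hle⟩ := h.exists_walkWeight_le huv ((Set.Finite.mem_toFinset _).mp hl)
  rw [sub_le_iff_le_add']
  exact (Finset.inf'_le _ ((Set.Finite.mem_toFinset _).mpr hl')).trans hle

theorem conservative_iff_exists_isPotential [Finite V] [AddCommGroup A] [Lattice A]
    [IsOrderedAddMonoid A] : Conservative R w ↔ ∃ s, IsPotential R w s :=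
  ⟨Conservative.exists_isPotential, fun ⟨_, hs⟩ => hs.conservative⟩

end Potential

section MeanPayoffGame

variable {V A : Type*} {E : Set (V × V)} {player : V → Bool}

/-- The arcs of the projection `G_π` of a mean payoff game on a positional strategy `π` of Player 1.
The values of `π` at the nodes of Player 0 are irrelevant. -/
def ProjectionArc (E : Set (V × V)) (player : V → Bool) (π : V → V) (u v : V) : Prop :=
  (u, v) ∈ E ∧ (player u = true → v = π u)

/-- A positional strategy of Player 1 that chooses arcs of the game. -/
def IsStrategy (E : Set (V × V)) (player : V → Bool) (π : V → V) : Prop :=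
  ∀ u, player u = true → (u, π u) ∈ E

/-- Consistency of the hyper temporal network associated to a mean payoff game, witnessed by the
schedule `s`. -/
def IsConsistentSchedule [Sub A] [LE A] (E : Set (V × V)) (player : V → Bool) (w : V → V → A)
    (s : V → A) : Prop :=
  (∀ u, player u = false → ∀ v, (u, v) ∈ E → s v - w u v ≤ s u) ∧
    ∀ u, player u = true → ∃ v, (u, v) ∈ E ∧ s v - w u v ≤ s u

lemma isConsistentSchedule_iff_exists_isStrategy [Sub A] [LE A] {w : V → V → A} {s : V → A} :
    IsConsistentSchedule E player w s ↔
      ∃ π, IsStrategy E player π ∧ IsPotential (ProjectionArc E player π) w s := by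
  constructor
  · rintro ⟨player0, player1⟩
    choose! π hπ using player1
    refine ⟨π, fun u hu => (hπ u hu).1, fun u v ⟨huv, choice⟩ => ?_⟩
    cases hu : player u with
    | false => exact player0 u hu v huv
    | true => exact choice hu ▸ (hπ u hu).2
  · rintro ⟨π, strategy, potential⟩
    refine ⟨fun u hu v huv => potential u v ⟨huv, by simp [hu]⟩, fun u hu => ?_⟩
    exact ⟨π u, strategy u hu, potential u (π u) ⟨strategy u hu, fun _ => rfl⟩⟩

end MeanPayoffGame

theorem stmt_11_general {V A : Type*} [Finite V] [AddCommGroup A] [Lattice A] [IsOrderedAddMonoid A]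
    (player : V → Bool) (E : Set (V × V)) (w : V → V → A) :
    (∃ s : V → A,
      (∀ u, player u = false → ∀ v, (u, v) ∈ E → s v - w u v ≤ s u) ∧
      (∀ u, player u = true → ∃ v, (u, v) ∈ E ∧ s v - w u v ≤ s u)) ↔
    (∃ π : V → V,
      (∀ u, player u = true → (u, π u) ∈ E) ∧
      (∀ (ℓ : ℕ) (c : ZMod (ℓ + 1) → V),
        (∀ k, (c k, c (k + 1)) ∈ E ∧ (player (c k) = true → c (k + 1) = π (c k))) →
        0 ≤ ∑ k, w (c k) (c (k + 1)))) := by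
  calc
    _ ↔ ∃ s, ∃ π, IsStrategy E player π ∧ IsPotential (ProjectionArc E player π) w s :=
      exists_congr fun _ => isConsistentSchedule_iff_exists_isStrategy
    _ ↔ ∃ π, IsStrategy E player π ∧ ∃ s, IsPotential (ProjectionArc E player π) w s := by
      rw [exists_comm]
      simp only [exists_and_left]
    _ ↔ ∃ π, IsStrategy E player π ∧ Conservative (ProjectionArc E player π) w := by
      simp only [conservative_iff_exists_isPotential]

/-- Let `G` be a finite directed weighted graph whose nodes are partitioned
between Player 0 (`player u = false`) and Player 1 (`player u = true`), with
no loops and every node having at least one outgoing arc.  The following are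
equivalent:
(i) there is `s : V → ℝ` with `s u ≥ s v - w u v` along every arc out of a
Player-0 node, and along at least one arc out of each Player-1 node (the
consistency of the HyTN associated to the mean payoff game `G`);
(ii) there is a positional strategy `π` for Player 1 such that the projection
`G_π` — keeping all arcs out of Player-0 nodes and, for each Player-1 node
`u`, only the arc `(u, π u)` — is conservative: every directed cycle of
`G_π` (encoded as a cyclic sequence `c : ZMod (ℓ+1) → V` whose consecutive
pairs are arcs of `G_π`) has nonnegative total weight.  (Condition (ii) holds
exactly when every node of `G` is a winning start position for Player 1.) -/
theorem stmt_11 {V : Type*} [Fintype V] (player : V → Bool)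
    (E : Set (V × V)) (w : V → V → ℝ)
    (hloop : ∀ a ∈ E, a.1 ≠ a.2)
    (hout : ∀ u : V, ∃ v, (u, v) ∈ E) :
    (∃ s : V → ℝ,
      (∀ u, player u = false → ∀ v, (u, v) ∈ E → s v - w u v ≤ s u) ∧
      (∀ u, player u = true → ∃ v, (u, v) ∈ E ∧ s v - w u v ≤ s u)) ↔
    (∃ π : V → V,
      (∀ u, player u = true → (u, π u) ∈ E) ∧
      (∀ (ℓ : ℕ) (c : ZMod (ℓ + 1) → V),
        (∀ k, (c k, c (k + 1)) ∈ E ∧ (player (c k) = true → c (k + 1) = π (c k))) →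
        0 ≤ ∑ k, w (c k) (c (k + 1)))) :=
  stmt_11_general player E w
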